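/- Let N ≥ 3 be an integer, let b > 0 and p ≥ 1 be real numbers, and let ρ, r₁, r₂ ∈ (1, ∞) satisfy 1/ρ = 1/r₁ + 1/r₂, b r₁ > N, and 2 ≤ p r₂ ≤ 2N/(N−2). Then there exists a constant C = C(N, b, p, ρ, r₁, r₂) > 0 such that for every R > 0 and every Schwartz function f : ℝ^N → ℂ, ( ∫_{{x : ‖x‖ > R}} ( ‖x‖^{−b} |f(x)|^p )^{ρ} dx )^{1/ρ} ≤ C R^{N/r₁ − b} (‖f‖_{L²} + ‖∇f‖_{L²})^p. -/

import Mathlib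

/-!
Hölder's inequality with exponents `1/ρ = 1/r₁ + 1/r₂` on the exterior region `{‖x‖ > R}` bounds the
left-hand side by the `L^{r₁}` norm of the weight `‖x‖^{-b}` times the `L^{r₂}` norm of `|f|^p`.

The weight is computed in polar coordinates (`lintegral_norm_rpow_exterior`): since `b r₁ > N`, the
integral of `‖x‖^{-b r₁}` over the exterior region is a finite constant times `R^{N - b r₁}`.

The second factor is `‖f‖_{L^m}^p` with `m = p r₂ ∈ [2, 2N/(N-2)]`, and is controlled by the Sobolev
embedding `H¹ ⊂ L^m` (`exists_lintegral_rpow_le_H1`). At the endpoint `2N/(N-2)` this is the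
Gagliardo-Nirenberg-Sobolev inequality, available in Mathlib for compactly supported functions. It
is applied to the truncations `χ(x/(n+1)) f(x)`, whose gradients are at most `|∇f| + M |f|` uniformly
in `n`, and Fatou's lemma removes the cutoff (`exists_sobolev_const`). Intermediate exponents
follow by log-convexity of `L^p` norms between `2` and `2N/(N-2)`
(`lintegral_enorm_rpow_le_of_interpolation`).

The estimates are carried out with `ℝ≥0∞`-valued integrals, so integrability of the left-hand side
does not have to be treated separately.
-/

open MeasureTheory
open scoped BigOperators
open Filter Topology Set
open scoped ENNReal NNReal

/-- The decay of the weight, integrated over the exterior of the ball of radius `R`. The constant is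
`N |B₁| / (s - N)`, from polar coordinates. -/
lemma lintegral_norm_rpow_exterior (N : ℕ) (hN : 3 ≤ N) (s : ℝ) (hs : (N : ℝ) < s) :
    ∃ c : ℝ, 0 < c ∧ ∀ R : ℝ, 0 < R →
      ∫⁻ x in {x : EuclideanSpace ℝ (Fin N) | R < ‖x‖}, ENNReal.ofReal (‖x‖ ^ (-s))
        ≤ ENNReal.ofReal (c * R ^ ((N : ℝ) - s)) := by
  have : Nonempty (Fin N) := ⟨⟨0, by omega⟩⟩
  have hd : Module.finrank ℝ (EuclideanSpace ℝ (Fin N)) = N := by simp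
  set V := (volume : Measure (EuclideanSpace ℝ (Fin N))).real (Metric.ball 0 1)
  have hV : 0 < V := ENNReal.toReal_pos (Metric.measure_ball_pos _ _ one_pos).ne'
    measure_ball_lt_top.ne
  have hN0 : (0 : ℝ) < N := by positivity
  have hsN : 0 < s - N := sub_pos.2 hs
  refine ⟨N * V / (s - N), by positivity, fun R hR => ?_⟩
  have hmeas : MeasurableSet {x : EuclideanSpace ℝ (Fin N) | R < ‖x‖} :=
    measurableSet_lt measurable_const measurable_norm
  have key : ∀ y ∈ Ioi (0 : ℝ), y ^ (N - 1) • (Ioi R).indicator (fun t : ℝ => t ^ (-s)) y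
      = (Ioi R).indicator (fun t : ℝ => t ^ ((N : ℝ) - 1 - s)) y := by
    intro y hy
    by_cases h : y ∈ Ioi R
    · rw [indicator_of_mem h, indicator_of_mem h, smul_eq_mul, ← Real.rpow_natCast,
        ← Real.rpow_add hy, Nat.cast_sub (by omega), Nat.cast_one, ← sub_eq_add_neg]
    · simp [indicator_of_notMem h]
  have hlt : (N : ℝ) - 1 - s < -1 := by linarith
  have hsub : Ioi R ∩ Ioi (0 : ℝ) = Ioi R := by
    rw [inter_eq_left]; exact Ioi_subset_Ioi hR.le
  have hint : Integrable (fun x : EuclideanSpace ℝ (Fin N) =>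
      (Ioi R).indicator (fun t : ℝ => t ^ (-s)) ‖x‖) := by
    rw [integrable_fun_norm_addHaar volume (f := (Ioi R).indicator (fun t : ℝ => t ^ (-s))), hd,
      integrableOn_congr_fun key measurableSet_Ioi, integrableOn_indicator_iff measurableSet_Ioi,
      hsub]
    exact integrableOn_Ioi_rpow_of_lt hlt hR
  have hval : ∫ x : EuclideanSpace ℝ (Fin N), (Ioi R).indicator (fun t : ℝ => t ^ (-s)) ‖x‖
      = N * V / (s - N) * R ^ ((N : ℝ) - s) := by
    rw [integral_fun_norm_addHaar, hd, setIntegral_congr_fun measurableSet_Ioi key,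
      setIntegral_indicator measurableSet_Ioi, inter_comm, hsub, integral_Ioi_rpow_of_lt hlt hR,
      show (N : ℝ) - 1 - s + 1 = -(s - N) by ring, neg_div_neg_eq, neg_sub]
    simp only [nsmul_eq_mul, smul_eq_mul]
    ring
  rw [← hval, ofReal_integral_eq_lintegral_ofReal hint, ← lintegral_indicator hmeas]
  · refine lintegral_mono fun x => ?_
    by_cases h : R < ‖x‖ <;> simp [indicator, h]
  · refine .of_forall fun x => indicator_nonneg (fun t ht => ?_) _
    exact Real.rpow_nonneg (hR.trans ht).le _

/-- The operator norm is at most the Hilbert-Schmidt norm, by Cauchy-Schwarz. -/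
lemma opNorm_sq_le_sum {N : ℕ} (L : EuclideanSpace ℝ (Fin N) →L[ℝ] ℂ) :
    ‖L‖ ^ 2 ≤ ∑ i, ‖L (EuclideanSpace.single i 1)‖ ^ 2 := by
  have h0 : 0 ≤ ∑ i, ‖L (EuclideanSpace.single i 1)‖ ^ 2 := by positivity
  rw [← Real.le_sqrt (norm_nonneg _) h0]
  refine L.opNorm_le_bound (Real.sqrt_nonneg _) fun v => ?_
  have hv : v = ∑ i, v i • EuclideanSpace.single i (1 : ℝ) := by
    simpa using ((EuclideanSpace.basisFun (Fin N) ℝ).sum_repr v).symm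
  calc ‖L v‖ = ‖∑ i, v i • L (EuclideanSpace.single i 1)‖ := by
        conv_lhs => rw [hv]
        simp only [map_sum, map_smul]
    _ ≤ ∑ i, ‖L (EuclideanSpace.single i 1)‖ * ‖v i‖ := by
        refine (norm_sum_le _ _).trans_eq (Finset.sum_congr rfl fun i _ => ?_)
        rw [norm_smul, mul_comm]
    _ ≤ √(∑ i, ‖L (EuclideanSpace.single i 1)‖ ^ 2) * √(∑ i, ‖v i‖ ^ 2) :=
        Real.sum_mul_le_sqrt_mul_sqrt _ _ _
    _ = _ := by rw [← EuclideanSpace.norm_eq]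

/-- Interpolation between `L²` and `L^q`: if both norms of `u` are at most `S`, so is its `L^m` norm
for `2 ≤ m ≤ q`. -/
lemma lintegral_enorm_rpow_le_of_interpolation {α E : Type*} [MeasurableSpace α]
    {μ : Measure α} [NormedAddCommGroup E] {u : α → E}
    (hu : AEStronglyMeasurable u μ) {q m : ℝ} {S : ℝ≥0∞} (hq : 2 < q) (h2m : 2 ≤ m) (hmq : m ≤ q)
    (h2 : ∫⁻ x, ‖u x‖ₑ ^ (2 : ℝ) ∂μ ≤ S ^ (2 : ℝ)) (h3 : ∫⁻ x, ‖u x‖ₑ ^ q ∂μ ≤ S ^ q) :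
    ∫⁻ x, ‖u x‖ₑ ^ m ∂μ ≤ S ^ m := by
  have hq' : 0 < q - 2 := sub_pos.2 hq
  -- The weights solving `a + c = 1` and `2 a + q c = m`.
  set a := (q - m) / (q - 2) with ha
  set c := (m - 2) / (q - 2) with hc
  have ha0 : 0 ≤ a := div_nonneg (by linarith) hq'.le
  have hc0 : 0 ≤ c := div_nonneg (by linarith) hq'.le
  have hac : a + c = 1 := by rw [ha, hc]; field_simp; ring
  have hm : 2 * a + q * c = m := by rw [ha, hc]; field_simp; ring
  have e : ∀ t : ℝ≥0∞, t ^ m = (t ^ (2 : ℝ)) ^ a * (t ^ q) ^ c := by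
    intro t
    rw [← ENNReal.rpow_mul, ← ENNReal.rpow_mul, ← ENNReal.rpow_add_of_nonneg _ _ (by positivity)
      (mul_nonneg (by linarith) hc0), hm]
  simp_rw [e]
  refine (ENNReal.lintegral_mul_norm_pow_le (hu.enorm.pow_const _) (hu.enorm.pow_const _)
    ha0 hc0 hac).trans ?_
  gcongr

/-- Sobolev inequality at the critical exponent `q = 2N/(N-2)` without a compact support assumption,
at the price of the full `H¹` norm on the right (both sides may be infinite). -/
lemma exists_sobolev_const (N : ℕ) (hN : 3 ≤ N) (q : ℝ≥0) (hq : (q : ℝ)⁻¹ = 2⁻¹ - (N : ℝ)⁻¹) :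
    ∃ K : ℝ≥0, ∀ u : EuclideanSpace ℝ (Fin N) → ℂ, ContDiff ℝ 1 u →
      eLpNorm u q volume ≤ K * (eLpNorm u 2 volume + eLpNorm (fderiv ℝ u) 2 volume) := by
  have hd : Module.finrank ℝ (EuclideanSpace ℝ (Fin N)) = N := by simp
  let χ : ContDiffBump (0 : EuclideanSpace ℝ (Fin N)) := ⟨1, 2, one_pos, one_lt_two⟩
  have hχ : ContDiff ℝ 1 χ := χ.contDiff
  obtain ⟨M₀, hM₀⟩ := (hχ.continuous_fderiv one_ne_zero).bounded_above_of_compact_support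
    (χ.hasCompactSupport.fderiv (𝕜 := ℝ))
  set M : ℝ≥0 := M₀.toNNReal
  have hM : ∀ x, ‖fderiv ℝ χ x‖ ≤ M := fun x => (hM₀ x).trans (Real.le_coe_toNNReal _)
  set C : ℝ≥0 := SNormLESNormFDerivOfEqConst ℂ
    (volume : Measure (EuclideanSpace ℝ (Fin N))) (2 : ℝ≥0)
  refine ⟨C * (M + 1), fun u hu => ?_⟩
  let ε : ℕ → ℝ := fun n => ((n : ℝ) + 1)⁻¹
  have hε0 : ∀ n, 0 < ε n := fun n => by positivity
  have hε1 : ∀ n, ε n ≤ 1 := fun n => inv_le_one_of_one_le₀ (by simp)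
  let w : ℕ → EuclideanSpace ℝ (Fin N) → ℂ := fun n x => χ (ε n • x) • u x
  have hχn : ∀ n, ContDiff ℝ 1 (fun x => χ (ε n • x)) := fun n =>
    hχ.comp (contDiff_const_smul (ε n))
  have hw : ∀ n, ContDiff ℝ 1 (w n) := fun n => (hχn n).smul hu
  have hws : ∀ n, HasCompactSupport (w n) := fun n =>
    (χ.hasCompactSupport.comp_smul (hε0 n).ne').smul_right
  -- Rescaling by `ε n ≤ 1` does not increase the gradient of the cutoff, hence a bound uniform in `n`.
  have hwd : ∀ n x, ‖fderiv ℝ (w n) x‖ ≤ M * ‖u x‖ + ‖fderiv ℝ u x‖ := by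
    intro n x
    have h1 : fderiv ℝ (w n) x = _ := fderiv_fun_smul ((hχn n).differentiable one_ne_zero x)
      (hu.differentiable one_ne_zero x)
    rw [h1, add_comm, fderiv_comp_smul (f := χ)]
    refine (norm_add_le _ _).trans (add_le_add ?_ ?_)
    · rw [ContinuousLinearMap.norm_smulRight_apply, norm_smul, Real.norm_of_nonneg (hε0 n).le]
      have := mul_le_mul (hε1 n) (hM (ε n • x)) (norm_nonneg _) zero_le_one
      rw [one_mul] at this
      gcongr
    · rw [norm_smul, Real.norm_of_nonneg χ.nonneg]
      exact mul_le_of_le_one_left (norm_nonneg _) χ.le_one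
  have hbound : ∀ n, eLpNorm (w n) q volume
      ≤ C * (M + 1) * (eLpNorm u 2 volume + eLpNorm (fderiv ℝ u) 2 volume) := by
    intro n
    have h1 := eLpNorm_le_eLpNorm_fderiv_of_eq volume (hw n) (hws n) (p := 2) (p' := q)
      one_le_two (by omega) (by rw [hd]; exact_mod_cast hq)
    refine h1.trans ?_
    rw [mul_assoc]
    refine mul_le_mul_right ?_ _
    have hum : AEStronglyMeasurable (fun x => (M : ℝ) * ‖u x‖) volume :=
      (continuous_const.mul hu.continuous.norm).aestronglyMeasurable
    have hdm : AEStronglyMeasurable (fun x => ‖fderiv ℝ u x‖) volume :=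
      (hu.continuous_fderiv one_ne_zero).norm.aestronglyMeasurable
    calc eLpNorm (fderiv ℝ (w n)) 2 volume
        ≤ eLpNorm ((fun x => (M : ℝ) * ‖u x‖) + fun x => ‖fderiv ℝ u x‖) 2 volume :=
          eLpNorm_mono_real (hwd n)
      _ ≤ eLpNorm (fun x => (M : ℝ) * ‖u x‖) 2 volume
          + eLpNorm (fun x => ‖fderiv ℝ u x‖) 2 volume := eLpNorm_add_le hum hdm one_le_two
      _ ≤ M * eLpNorm u 2 volume + eLpNorm (fderiv ℝ u) 2 volume := by
          rw [eLpNorm_norm]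
          refine add_le_add ?_ le_rfl
          refine eLpNorm_le_nnreal_smul_eLpNorm_of_ae_le_mul (.of_forall fun x => ?_) 2
          rw [← NNReal.coe_le_coe]
          simp
      _ ≤ (M + 1) * (eLpNorm u 2 volume + eLpNorm (fderiv ℝ u) 2 volume) := by
          rw [mul_add]
          refine add_le_add ?_ ?_
          · gcongr; exact le_self_add
          · exact le_mul_of_one_le_left' le_add_self
  have hlim : ∀ x, Tendsto (fun n => w n x) atTop (𝓝 (u x)) := by
    intro x
    have h1 : Tendsto ε atTop (𝓝 0) := by
      simpa [ε, one_div] using tendsto_one_div_add_atTop_nhds_zero_nat (𝕜 := ℝ)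
    have h2 : Tendsto (fun n => ε n • x) atTop (𝓝 0) := by simpa using h1.smul_const x
    have h3 : Tendsto (fun n => χ (ε n • x)) atTop (𝓝 1) := by
      have := (hχ.continuous.tendsto 0).comp h2
      rwa [χ.one_of_mem_closedBall (Metric.mem_closedBall_self χ.rIn_pos.le)] at this
    simpa [w] using h3.smul_const (u x)
  -- Fatou's lemma for `L^q` norms.
  refine (Lp.eLpNorm_lim_le_liminf_eLpNorm (fun n => (hw n).continuous.aestronglyMeasurable) u
    (.of_forall hlim)).trans ?_
  push_cast
  exact (liminf_le_liminf (.of_forall hbound)).trans_eq (liminf_const _)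

lemma eLpNorm_two_eq (N : ℕ) (f : SchwartzMap (EuclideanSpace ℝ (Fin N)) ℂ) :
    eLpNorm f 2 volume = ENNReal.ofReal ((∫ x, ‖f x‖ ^ 2) ^ ((1:ℝ)/2)) := by
  rw [(f.memLp 2 volume).eLpNorm_eq_integral_rpow_norm two_ne_zero ENNReal.ofNat_ne_top]
  simp

lemma eLpNorm_fderiv_two_le (N : ℕ) (f : SchwartzMap (EuclideanSpace ℝ (Fin N)) ℂ) :
    eLpNorm (fderiv ℝ f) 2 volume ≤ ENNReal.ofReal ((∫ x, ∑ i : Fin N,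
      ‖fderiv ℝ (⇑f) x (EuclideanSpace.single i 1)‖ ^ 2) ^ ((1:ℝ)/2)) := by
  have hmem : MemLp (fderiv ℝ f) 2 volume :=
    (SchwartzMap.fderivCLM ℝ (EuclideanSpace ℝ (Fin N)) ℂ f).memLp 2 volume
  rw [hmem.eLpNorm_eq_integral_rpow_norm two_ne_zero ENNReal.ofNat_ne_top]
  simp only [ENNReal.toReal_ofNat, Real.rpow_ofNat, ← one_div]
  refine ENNReal.ofReal_le_ofReal (Real.rpow_le_rpow (by positivity) ?_ (by norm_num))
  refine integral_mono ?_ ?_ fun x => opNorm_sq_le_sum _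
  · simpa using hmem.integrable_norm_pow two_ne_zero
  · refine integrable_finsetSum _ fun i _ => ?_
    have : MemLp (fun x => fderiv ℝ f x (EuclideanSpace.single i 1)) 2 volume :=
      (ContinuousLinearMap.apply ℝ ℂ (EuclideanSpace.single i (1 : ℝ))).comp_memLp' hmem
    simpa using this.integrable_norm_pow two_ne_zero

/-- The Sobolev embedding `H¹ ⊂ L^m` for `2 ≤ m ≤ 2N/(N-2)` on Schwartz functions, with the
`m`-th power of the norms. -/
lemma exists_lintegral_rpow_le_H1 (N : ℕ) (hN : 3 ≤ N) (m : ℝ) (h2m : 2 ≤ m)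
    (hm : m ≤ 2 * N / ((N : ℝ) - 2)) :
    ∃ K : ℝ, 0 < K ∧ ∀ f : SchwartzMap (EuclideanSpace ℝ (Fin N)) ℂ,
      ∫⁻ x, ‖f x‖ₑ ^ m ≤ ENNReal.ofReal (K * ((∫ x, ‖f x‖ ^ 2) ^ ((1:ℝ)/2)
        + (∫ x, ∑ i : Fin N,
            ‖fderiv ℝ (⇑f) x (EuclideanSpace.single i 1)‖ ^ 2) ^ ((1:ℝ)/2))) ^ m := by
  have hN' : (3 : ℝ) ≤ N := by exact_mod_cast hN
  have hN2 : (0 : ℝ) < N - 2 := by linarith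
  obtain ⟨q, hq⟩ : ∃ q : ℝ≥0, (q : ℝ) = 2 * N / ((N : ℝ) - 2) :=
    ⟨⟨2 * N / ((N : ℝ) - 2), by positivity⟩, rfl⟩
  have h2q : (2 : ℝ) < q := by rw [hq, lt_div_iff₀ hN2]; linarith
  have hqi : (q : ℝ)⁻¹ = 2⁻¹ - (N : ℝ)⁻¹ := by rw [hq]; field_simp
  obtain ⟨K, hK⟩ := exists_sobolev_const N hN q hqi
  refine ⟨K + 1, by positivity, fun f => ?_⟩
  set A := (∫ x, ‖f x‖ ^ 2) ^ ((1:ℝ)/2)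
  set B := (∫ x, ∑ i : Fin N,
    ‖fderiv ℝ (⇑f) x (EuclideanSpace.single i 1)‖ ^ 2) ^ ((1:ℝ)/2)
  have hA : 0 ≤ A := by positivity
  have hB : 0 ≤ B := by positivity
  have hT : eLpNorm f 2 volume + eLpNorm (fderiv ℝ f) 2 volume ≤ ENNReal.ofReal (A + B) := by
    rw [ENNReal.ofReal_add hA hB, eLpNorm_two_eq]
    exact add_le_add le_rfl (eLpNorm_fderiv_two_le N f)
  have hS : ENNReal.ofReal ((K + 1) * (A + B)) = (K + 1) * ENNReal.ofReal (A + B) := by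
    rw [ENNReal.ofReal_mul (by positivity), ENNReal.ofReal_add (by positivity) zero_le_one]
    simp
  have hconv : ∀ r : ℝ≥0, r ≠ 0 → eLpNorm f r volume ≤ ENNReal.ofReal ((K + 1) * (A + B)) →
      ∫⁻ x, ‖f x‖ₑ ^ (r : ℝ) ≤ ENNReal.ofReal ((K + 1) * (A + B)) ^ (r : ℝ) := by
    intro r hr h
    rw [← eLpNorm_nnreal_pow_eq_lintegral hr]
    gcongr
  refine lintegral_enorm_rpow_le_of_interpolation f.continuous.aestronglyMeasurable h2q h2m
    (hq ▸ hm) (hconv 2 two_ne_zero ?_) (hconv q ?_ ?_)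
  · rw [hS]
    exact (le_self_add.trans hT).trans (le_mul_of_one_le_left' le_add_self)
  · rintro rfl; norm_num at h2q
  · rw [hS]
    refine (hK f (f.smooth 1)).trans ?_
    gcongr
    exact le_self_add

/-- Exterior Hölder/Sobolev estimate:
`‖ |x|^{−b}|f|^p ‖_{L^ρ(|x|>R)} ≤ C R^{N/r₁−b} (‖f‖_{L²}+‖∇f‖_{L²})^p`. -/
theorem stmt9 (N : ℕ) (hN : 3 ≤ N) (b p ρ r₁ r₂ : ℝ)
    (hb : 0 < b) (hp : 1 ≤ p)
    (hρ : 1 < ρ) (hr₁ : 1 < r₁) (hr₂ : 1 < r₂)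
    (hhold : 1/ρ = 1/r₁ + 1/r₂)
    (hbr : (N:ℝ) < b * r₁)
    (hpr1 : 2 ≤ p * r₂) (hpr2 : p * r₂ ≤ 2*N/((N:ℝ)-2)) :
    ∃ C : ℝ, 0 < C ∧ ∀ R : ℝ, 0 < R →
      ∀ f : SchwartzMap (EuclideanSpace ℝ (Fin N)) ℂ,
        (∫ x in {x : EuclideanSpace ℝ (Fin N) | R < ‖x‖},
            (‖x‖ ^ (-b) * ‖f x‖ ^ p) ^ ρ) ^ (1/ρ)
          ≤ C * R ^ ((N:ℝ)/r₁ - b) *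
            ((∫ x, ‖f x‖ ^ 2) ^ ((1:ℝ)/2)
              + (∫ x, ∑ i : Fin N,
                  ‖fderiv ℝ (⇑f) x (EuclideanSpace.single i 1)‖ ^ 2) ^ ((1:ℝ)/2)) ^ p := by
  have hρ0 : 0 < ρ := by linarith
  have hr₁0 : 0 < r₁ := by linarith
  have hr₂0 : 0 < r₂ := by linarith
  have hp0 : 0 < p := by linarith
  obtain ⟨c, hc, hweight⟩ := lintegral_norm_rpow_exterior N hN (b * r₁) hbr
  obtain ⟨K, hK, hsob⟩ := exists_lintegral_rpow_le_H1 N hN (p * r₂) hpr1 hpr2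
  refine ⟨c ^ (1 / r₁) * K ^ p, by positivity, fun R hR f => ?_⟩
  specialize hweight R hR
  specialize hsob f
  set T := (∫ x, ‖f x‖ ^ 2) ^ ((1:ℝ)/2)
    + (∫ x, ∑ i : Fin N,
        ‖fderiv ℝ (⇑f) x (EuclideanSpace.single i 1)‖ ^ 2) ^ ((1:ℝ)/2)
  have hT : 0 ≤ T := by positivity
  let G : EuclideanSpace ℝ (Fin N) → ℝ≥0∞ := fun x => ENNReal.ofReal (‖x‖ ^ (-b))
  let H : EuclideanSpace ℝ (Fin N) → ℝ≥0∞ := fun x => ‖f x‖ₑ ^ p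
  have hGm : Measurable G := (measurable_norm.pow_const _).ennreal_ofReal
  have hfm : Measurable fun x => ‖f x‖ := f.continuous.norm.measurable
  have hHm : Measurable H := f.continuous.measurable.enorm.pow_const _
  have hlt : ρ < r₁ := by
    have : 1 / r₁ < 1 / ρ := by rw [hhold]; linarith [one_div_pos.2 hr₂0]
    exact (one_div_lt_one_div hr₁0 hρ0).1 this
  have hholder := ENNReal.lintegral_Lp_mul_le_Lq_mul_Lr hρ0 hlt hhold
    (volume.restrict {x : EuclideanSpace ℝ (Fin N) | R < ‖x‖}) hGm.aemeasurable hHm.aemeasurable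
  have hG : (∫⁻ x in {x : EuclideanSpace ℝ (Fin N) | R < ‖x‖}, G x ^ r₁) ^ (1 / r₁)
      ≤ ENNReal.ofReal (c ^ (1 / r₁) * R ^ ((N : ℝ) / r₁ - b)) := by
    have e : ∀ x, G x ^ r₁ = ENNReal.ofReal (‖x‖ ^ (-(b * r₁))) := fun x => by
      simp only [G]
      rw [ENNReal.ofReal_rpow_of_nonneg (by positivity) hr₁0.le, ← Real.rpow_mul (norm_nonneg _),
        neg_mul]
    simp_rw [e]
    refine (ENNReal.rpow_le_rpow hweight (by positivity)).trans_eq ?_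
    rw [ENNReal.ofReal_rpow_of_nonneg (by positivity) (by positivity),
      Real.mul_rpow hc.le (by positivity), ← Real.rpow_mul hR.le]
    congr 3
    field_simp
  have hH : (∫⁻ x in {x : EuclideanSpace ℝ (Fin N) | R < ‖x‖}, H x ^ r₂) ^ (1 / r₂)
      ≤ ENNReal.ofReal (K ^ p * T ^ p) := by
    have e : ∀ x, H x ^ r₂ = ‖f x‖ₑ ^ (p * r₂) := fun x => (ENNReal.rpow_mul _ _ _).symm
    simp_rw [e]
    refine (ENNReal.rpow_le_rpow ((setLIntegral_le_lintegral _ _).trans hsob)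
      (by positivity)).trans_eq ?_
    rw [← ENNReal.rpow_mul, ← Real.mul_rpow hK.le hT,
      ← ENNReal.ofReal_rpow_of_nonneg (by positivity) hp0.le]
    congr 1
    field_simp
  have hI : ∀ x, ENNReal.ofReal ((‖x‖ ^ (-b) * ‖f x‖ ^ p) ^ ρ) = (G * H) x ^ ρ := by
    intro x
    rw [← ENNReal.ofReal_rpow_of_nonneg (by positivity) hρ0.le,
      ENNReal.ofReal_mul (by positivity), ← ENNReal.ofReal_rpow_of_nonneg (by positivity) hp0.le,
      ofReal_norm]
    rfl
  have hmeas : Measurable fun x : EuclideanSpace ℝ (Fin N) => (‖x‖ ^ (-b) * ‖f x‖ ^ p) ^ ρ :=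
    ((measurable_norm.pow_const _).mul (hfm.pow_const _)).pow_const _
  rw [integral_eq_lintegral_of_nonneg_ae (.of_forall fun x => by positivity)
    hmeas.aestronglyMeasurable,
    ENNReal.toReal_rpow]
  simp_rw [hI]
  refine ENNReal.toReal_le_of_le_ofReal (by positivity) (hholder.trans ?_)
  refine (mul_le_mul' hG hH).trans_eq ?_
  rw [← ENNReal.ofReal_mul (by positivity)]
  congr 1
  ring
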